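/- If f satisfies (H∞), then every solution of (Δ-CP) can be extended to a maximal solution of (Δ-CP), i.e. for every solution (q,I_𝕋) of (Δ-CP) there exists a maximal solution (q̄,Ī_𝕋) of (Δ-CP) that is an extension of (q,I_𝕋). -/

import Mathlib

/-!
The theorem is an application of Zorn's lemma to the solutions extending `(q, I)`, preordered by
`SolExtends`. The upper bound of a nonempty chain is obtained by gluing (`isSol_glue`): the union of
the intervals is an interval because they all contain `t₀`, the functions of the chain agree where
they are both defined, and any two points of the union lie in the interval of a single member.

The only delicate point is that `HasDeltaDerivAt T q _ a` depends on the values of `q` on `T` to the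
left of `a`, also when `a` is the least point of the interval of definition. At a right-dense `a`
this does not matter, as `{a}` is Δ-null. At a right-scattered `a` the Δ-derivative exists as soon
as the function is continuous at `a`, so the glued function is extended by a constant to the left
of the least point of its domain (`hasDeltaDerivAt_of_const_left`).
-/

open MeasureTheory Set Filter Classical

noncomputable section
open scoped Classical

/-- The forward jump operator `σ` of a time scale `T`. -/
def tsSigma (T : Set ℝ) (t : ℝ) : ℝ :=
  if ({s | s ∈ T ∧ t < s}).Nonempty then sInf {s | s ∈ T ∧ t < s} else t

/-- The backward jump operator `ρ` of a time scale `T`. -/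
def tsRho (T : Set ℝ) (t : ℝ) : ℝ :=
  if ({s | s ∈ T ∧ s < t}).Nonempty then sSup {s | s ∈ T ∧ s < t} else t

/-- The graininess function `μ(t) = σ(t) - t`. -/
def tsGrain (T : Set ℝ) (t : ℝ) : ℝ := tsSigma T t - t

/-- `t` is a right-scattered point of `T`. -/
def RightScattered (T : Set ℝ) (t : ℝ) : Prop := t < tsSigma T t

/-- `t` is a right-dense point of `T`. -/
def RightDense (T : Set ℝ) (t : ℝ) : Prop := tsSigma T t = t

/-- `t` is a left-scattered point of `T`. -/
def LeftScattered (T : Set ℝ) (t : ℝ) : Prop := tsRho T t < t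

/-- `t` is a left-dense point of `T`. -/
def LeftDense (T : Set ℝ) (t : ℝ) : Prop := tsRho T t = t

/-- `𝕋 \ {sup 𝕋}`: the time scale minus its maximum (if the maximum exists). -/
def tsUpDomain (T : Set ℝ) : Set ℝ := {t | t ∈ T ∧ ¬ IsGreatest T t}

/-- The Lebesgue Δ-measure on the time scale `T`: Lebesgue measure restricted to `T`
plus `Σ_{r ∈ ℛ} μ(r)·δ_r` over right-scattered points `r`. -/
def deltaMeasure (T : Set ℝ) : Measure ℝ :=
  volume.restrict T +
    Measure.sum (fun r : {t : ℝ // t ∈ T ∧ RightScattered T t} =>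
      ENNReal.ofReal (tsGrain T r.1) • Measure.dirac r.1)

/-- Δ-differentiability of `q` at `t`, with Δ-derivative `q'`. -/
def HasDeltaDerivAt {n : ℕ} (T : Set ℝ) (q : ℝ → EuclideanSpace ℝ (Fin n))
    (q' : EuclideanSpace ℝ (Fin n)) (t : ℝ) : Prop :=
  ∀ ε > (0:ℝ), ∃ U ∈ nhds t, ∀ s ∈ U ∩ T,
    ‖q (tsSigma T t) - q s - (tsSigma T t - s) • q'‖ ≤ ε * |tsSigma T t - s|

/-- Absolute continuity of `q` on `[a,b]_𝕋`. -/
def DeltaAC {n : ℕ} (T : Set ℝ) (a b : ℝ) (q : ℝ → EuclideanSpace ℝ (Fin n)) : Prop :=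
  ∀ ε > (0:ℝ), ∃ δ > (0:ℝ), ∀ (m : ℕ) (u v : ℕ → ℝ),
    (∀ k < m, u k ∈ Icc a b ∩ T) → (∀ k < m, v k ∈ Icc a b ∩ T) →
    (∀ k < m, u k ≤ v k) →
    (∀ i < m, ∀ j < m, i ≠ j → Disjoint (Icc (u i) (v i)) (Icc (u j) (v j))) →
    (∑ k ∈ Finset.range m, (v k - u k)) < δ →
    (∑ k ∈ Finset.range m, ‖q (v k) - q (u k)‖) < ε

/-- `f` is a Δ-Carathéodory function on `Ω × 𝕋\{sup 𝕋}`. -/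
def DeltaCaratheodory {n : ℕ} (T : Set ℝ) (Ω : Set (EuclideanSpace ℝ (Fin n)))
    (f : EuclideanSpace ℝ (Fin n) → ℝ → EuclideanSpace ℝ (Fin n)) : Prop :=
  (∀ x ∈ Ω, AEMeasurable (fun t => f x t) ((deltaMeasure T).restrict (tsUpDomain T))) ∧
    ∀ᵐ t ∂((deltaMeasure T).restrict (tsUpDomain T)), ContinuousOn (fun x => f x t) Ω

/-- Hypothesis (H∞): `f` is locally bounded. -/
def HInfty {n : ℕ} (T : Set ℝ) (Ω : Set (EuclideanSpace ℝ (Fin n)))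
    (f : EuclideanSpace ℝ (Fin n) → ℝ → EuclideanSpace ℝ (Fin n)) : Prop :=
  ∀ K : Set (EuclideanSpace ℝ (Fin n)), K ⊆ Ω → IsCompact K →
    ∀ a ∈ T, ∀ b ∈ T, a < b →
      ∃ M : ℝ, 0 ≤ M ∧
        ∀ᵐ t ∂((deltaMeasure T).restrict (Ico a b ∩ T)), ∀ x ∈ K, ‖f x t‖ ≤ M

/-- Hypothesis (H^rd_loc-Lip): local Lipschitz continuity at right-dense points. -/
def HrdLocLip {n : ℕ} (T : Set ℝ) (Ω : Set (EuclideanSpace ℝ (Fin n)))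
    (f : EuclideanSpace ℝ (Fin n) → ℝ → EuclideanSpace ℝ (Fin n)) : Prop :=
  ∀ xb ∈ Ω, ∀ tb ∈ T, ¬ IsGreatest T tb → RightDense T tb →
    ∃ R > (0:ℝ), ∃ δ > (0:ℝ), ∃ L : ℝ, 0 ≤ L ∧
      Metric.closedBall xb R ⊆ Ω ∧ tb + δ ∈ T ∧
      ∀ᵐ t ∂((deltaMeasure T).restrict (Ico tb (tb + δ) ∩ T)),
        ∀ x₁ ∈ Metric.closedBall xb R, ∀ x₂ ∈ Metric.closedBall xb R,
          ‖f x₁ t - f x₂ t‖ ≤ L * ‖x₁ - x₂‖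

/-- Hypothesis (H^ld_loc-Lip): local Lipschitz continuity at left-dense points. -/
def HldLocLip {n : ℕ} (T : Set ℝ) (Ω : Set (EuclideanSpace ℝ (Fin n)))
    (f : EuclideanSpace ℝ (Fin n) → ℝ → EuclideanSpace ℝ (Fin n)) : Prop :=
  ∀ xb ∈ Ω, ∀ tb ∈ T, ¬ IsLeast T tb → LeftDense T tb →
    ∃ R > (0:ℝ), ∃ δ > (0:ℝ), ∃ L : ℝ, 0 ≤ L ∧
      Metric.closedBall xb R ⊆ Ω ∧ tb - δ ∈ T ∧
      ∀ᵐ t ∂((deltaMeasure T).restrict (Ico (tb - δ) tb ∩ T)),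
        ∀ x₁ ∈ Metric.closedBall xb R, ∀ x₂ ∈ Metric.closedBall xb R,
          ‖f x₁ t - f x₂ t‖ ≤ L * ‖x₁ - x₂‖

/-- Hypothesis (H^forw_stab): `G⁺(t) : x ↦ x + μ(t) f(x,t)` maps `Ω` into `Ω`. -/
def HforwStab {n : ℕ} (T : Set ℝ) (Ω : Set (EuclideanSpace ℝ (Fin n)))
    (f : EuclideanSpace ℝ (Fin n) → ℝ → EuclideanSpace ℝ (Fin n)) : Prop :=
  ∀ t ∈ T, RightScattered T t → ∀ x ∈ Ω, x + tsGrain T t • f x t ∈ Ω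

/-- Hypothesis (H^back_regr): `G⁺(t)` is a bijection from `Ω` onto `ℝⁿ`. -/
def HbackRegr {n : ℕ} (T : Set ℝ) (Ω : Set (EuclideanSpace ℝ (Fin n)))
    (f : EuclideanSpace ℝ (Fin n) → ℝ → EuclideanSpace ℝ (Fin n)) : Prop :=
  ∀ t ∈ T, RightScattered T t → Set.BijOn (fun x => x + tsGrain T t • f x t) Ω univ

/-- Hypothesis (H^back_stab): `G⁻(t) : x ↦ x - μ(t) f(x,t)` maps `Ω` into `Ω`. -/
def HbackStab {n : ℕ} (T : Set ℝ) (Ω : Set (EuclideanSpace ℝ (Fin n)))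
    (f : EuclideanSpace ℝ (Fin n) → ℝ → EuclideanSpace ℝ (Fin n)) : Prop :=
  ∀ t ∈ T, RightScattered T t → ∀ x ∈ Ω, x - tsGrain T t • f x t ∈ Ω

/-- Hypothesis (H^forw_regr): `G⁻(t)` is a bijection from `Ω` onto `ℝⁿ`. -/
def HforwRegr {n : ℕ} (T : Set ℝ) (Ω : Set (EuclideanSpace ℝ (Fin n)))
    (f : EuclideanSpace ℝ (Fin n) → ℝ → EuclideanSpace ℝ (Fin n)) : Prop :=
  ∀ t ∈ T, RightScattered T t → Set.BijOn (fun x => x - tsGrain T t • f x t) Ω univ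

/-- Hypothesis (H^glob_Lip): global Lipschitz continuity. -/
def HglobLip {n : ℕ} (T : Set ℝ) (Ω : Set (EuclideanSpace ℝ (Fin n)))
    (f : EuclideanSpace ℝ (Fin n) → ℝ → EuclideanSpace ℝ (Fin n)) : Prop :=
  ∃ L : ℝ, 0 ≤ L ∧
    ∀ᵐ t ∂((deltaMeasure T).restrict (tsUpDomain T)),
      ∀ x₁ ∈ Ω, ∀ x₂ ∈ Ω, ‖f x₁ t - f x₂ t‖ ≤ L * ‖x₁ - x₂‖

/-- The relation `a ⊴ t₀ ⊴ b`. -/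
def Trile (T : Set ℝ) (t₀ a b : ℝ) : Prop :=
  (IsLeast T t₀ ∧ a = t₀ ∧ t₀ < b) ∨
  (IsGreatest T t₀ ∧ a < t₀ ∧ t₀ = b) ∨
  (¬ IsLeast T t₀ ∧ ¬ IsGreatest T t₀ ∧ a < t₀ ∧ t₀ < b)

/-- `(q, [a,b]_𝕋)` is a solution of the non shifted Δ-Cauchy problem (Δ-CP). -/
def IsSolIcc {n : ℕ} (T : Set ℝ) (Ω : Set (EuclideanSpace ℝ (Fin n)))
    (f : EuclideanSpace ℝ (Fin n) → ℝ → EuclideanSpace ℝ (Fin n))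
    (t₀ : ℝ) (q₀ : EuclideanSpace ℝ (Fin n))
    (q : ℝ → EuclideanSpace ℝ (Fin n)) (a b : ℝ) : Prop :=
  (∀ t ∈ Icc a b ∩ T, q t ∈ Ω) ∧ DeltaAC T a b q ∧ q t₀ = q₀ ∧
    ∀ᵐ t ∂((deltaMeasure T).restrict (Ico a b ∩ T)),
      HasDeltaDerivAt T q (f (q t) t) t

/-- `(q, [a,b]_𝕋)` is a solution of the shifted Δ-Cauchy problem (Δ-CP^σ). -/
def IsSolIccS {n : ℕ} (T : Set ℝ) (Ω : Set (EuclideanSpace ℝ (Fin n)))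
    (f : EuclideanSpace ℝ (Fin n) → ℝ → EuclideanSpace ℝ (Fin n))
    (t₀ : ℝ) (q₀ : EuclideanSpace ℝ (Fin n))
    (q : ℝ → EuclideanSpace ℝ (Fin n)) (a b : ℝ) : Prop :=
  (∀ t ∈ Icc a b ∩ T, q t ∈ Ω) ∧ DeltaAC T a b q ∧ q t₀ = q₀ ∧
    ∀ᵐ t ∂((deltaMeasure T).restrict (Ico a b ∩ T)),
      HasDeltaDerivAt T q (f (q (tsSigma T t)) t) t

/-- `I_𝕋 ∈ 𝕀`: `I` is a real interval containing points `a, b` of `T` with `a ⊴ t₀ ⊴ b`. -/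
def MemI (T : Set ℝ) (t₀ : ℝ) (I : Set ℝ) : Prop :=
  I.OrdConnected ∧ ∃ a ∈ I ∩ T, ∃ b ∈ I ∩ T, Trile T t₀ a b

/-- `(q, I_𝕋)` is a solution of (Δ-CP). -/
def IsSol {n : ℕ} (T : Set ℝ) (Ω : Set (EuclideanSpace ℝ (Fin n)))
    (f : EuclideanSpace ℝ (Fin n) → ℝ → EuclideanSpace ℝ (Fin n))
    (t₀ : ℝ) (q₀ : EuclideanSpace ℝ (Fin n))
    (q : ℝ → EuclideanSpace ℝ (Fin n)) (I : Set ℝ) : Prop :=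
  MemI T t₀ I ∧ (∀ t ∈ I ∩ T, q t ∈ Ω) ∧
    ∀ a ∈ I ∩ T, ∀ b ∈ I ∩ T, Trile T t₀ a b → IsSolIcc T Ω f t₀ q₀ q a b

/-- `(q, I_𝕋)` is a solution of (Δ-CP^σ). -/
def IsSolS {n : ℕ} (T : Set ℝ) (Ω : Set (EuclideanSpace ℝ (Fin n)))
    (f : EuclideanSpace ℝ (Fin n) → ℝ → EuclideanSpace ℝ (Fin n))
    (t₀ : ℝ) (q₀ : EuclideanSpace ℝ (Fin n))
    (q : ℝ → EuclideanSpace ℝ (Fin n)) (I : Set ℝ) : Prop :=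
  MemI T t₀ I ∧ (∀ t ∈ I ∩ T, q t ∈ Ω) ∧
    ∀ a ∈ I ∩ T, ∀ b ∈ I ∩ T, Trile T t₀ a b → IsSolIccS T Ω f t₀ q₀ q a b

/-- `(q₁, I₁_𝕋)` is an extension of `(q, I_𝕋)`. -/
def SolExtends {n : ℕ} (T : Set ℝ) (q₁ : ℝ → EuclideanSpace ℝ (Fin n)) (I₁ : Set ℝ)
    (q : ℝ → EuclideanSpace ℝ (Fin n)) (I : Set ℝ) : Prop :=
  I ∩ T ⊆ I₁ ∩ T ∧ EqOn q₁ q (I ∩ T)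

/-- `(q, I_𝕋)` is a maximal solution of (Δ-CP). -/
def IsMaxSol {n : ℕ} (T : Set ℝ) (Ω : Set (EuclideanSpace ℝ (Fin n)))
    (f : EuclideanSpace ℝ (Fin n) → ℝ → EuclideanSpace ℝ (Fin n))
    (t₀ : ℝ) (q₀ : EuclideanSpace ℝ (Fin n))
    (q : ℝ → EuclideanSpace ℝ (Fin n)) (I : Set ℝ) : Prop :=
  IsSol T Ω f t₀ q₀ q I ∧
    ∀ q₁ I₁, IsSol T Ω f t₀ q₀ q₁ I₁ → SolExtends T q₁ I₁ q I → I₁ ∩ T = I ∩ T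

/-- `(q, I_𝕋)` is a maximal solution of (Δ-CP^σ). -/
def IsMaxSolS {n : ℕ} (T : Set ℝ) (Ω : Set (EuclideanSpace ℝ (Fin n)))
    (f : EuclideanSpace ℝ (Fin n) → ℝ → EuclideanSpace ℝ (Fin n))
    (t₀ : ℝ) (q₀ : EuclideanSpace ℝ (Fin n))
    (q : ℝ → EuclideanSpace ℝ (Fin n)) (I : Set ℝ) : Prop :=
  IsSolS T Ω f t₀ q₀ q I ∧
    ∀ q₁ I₁, IsSolS T Ω f t₀ q₀ q₁ I₁ → SolExtends T q₁ I₁ q I → I₁ ∩ T = I ∩ T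

theorem le_tsSigma {T : Set ℝ} {t b : ℝ} (hb : b ∈ T) (htb : t < b) : t ≤ tsSigma T t := by
  have hne : ({s | s ∈ T ∧ t < s}).Nonempty := ⟨b, hb, htb⟩
  rw [tsSigma, if_pos hne]
  exact le_csInf hne fun s hs => hs.2.le

theorem tsSigma_le {T : Set ℝ} {t b : ℝ} (hb : b ∈ T) (htb : t < b) : tsSigma T t ≤ b := by
  have hne : ({s | s ∈ T ∧ t < s}).Nonempty := ⟨b, hb, htb⟩
  rw [tsSigma, if_pos hne]
  exact csInf_le ⟨t, fun s hs => hs.2.le⟩ ⟨hb, htb⟩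

theorem tsSigma_mem {T : Set ℝ} (hT : IsClosed T) {t b : ℝ} (hb : b ∈ T) (htb : t < b) :
    tsSigma T t ∈ T := by
  have hne : ({s | s ∈ T ∧ t < s}).Nonempty := ⟨b, hb, htb⟩
  rw [tsSigma, if_pos hne]
  have hcl := csInf_mem_closure hne ⟨t, fun s hs => hs.2.le⟩
  exact closure_minimal (fun s hs => hs.1) hT hcl

/-- Right-dense points are Δ-null. -/
theorem deltaMeasure_singleton {T : Set ℝ} {a : ℝ} (ha : ¬ RightScattered T a) :
    deltaMeasure T {a} = 0 := by
  have hvol : volume.restrict T {a} = 0 := by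
    refine le_antisymm ((Measure.restrict_apply_le _ _).trans ?_) zero_le
    simp
  rw [deltaMeasure, Measure.add_apply, hvol, zero_add,
    Measure.sum_apply _ (measurableSet_singleton a), ENNReal.tsum_eq_zero]
  rintro ⟨r, hr, hrs⟩
  have hra : r ≠ a := by rintro rfl; exact ha hrs
  simp [hra]

theorem HasDeltaDerivAt.congr {n : ℕ} {T : Set ℝ} {q g : ℝ → EuclideanSpace ℝ (Fin n)}
    {q' : EuclideanSpace ℝ (Fin n)} {t : ℝ} (h : HasDeltaDerivAt T q q' t)
    {V : Set ℝ} (hV : V ∈ nhds t) (hσ : g (tsSigma T t) = q (tsSigma T t))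
    (heq : ∀ s ∈ V ∩ T, g s = q s) : HasDeltaDerivAt T g q' t := by
  intro ε hε
  obtain ⟨U, hU, h⟩ := h ε hε
  refine ⟨U ∩ V, Filter.inter_mem hU hV, fun s hs => ?_⟩
  rw [hσ, heq s ⟨hs.1.2, hs.2⟩]
  exact h s ⟨hs.1.1, hs.2⟩

/-- If `a` is right-scattered and `q` is Δ-differentiable at `a`, its Δ-derivative is the difference
quotient between `a` and `σ(a)`. Hence a function taking the same values at these two points and
constant on `T` to the left of `a` has the same Δ-derivative at `a`. -/
theorem hasDeltaDerivAt_of_const_left {n : ℕ} {T : Set ℝ} {q g : ℝ → EuclideanSpace ℝ (Fin n)}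
    {q' : EuclideanSpace ℝ (Fin n)} {a : ℝ} (haT : a ∈ T) (ha : RightScattered T a)
    (h : HasDeltaDerivAt T q q' a)
    (hσ : g (tsSigma T a) = q (tsSigma T a)) (heq : ∀ s ∈ T, s ≤ a → g s = q a) :
    HasDeltaDerivAt T g q' a := by
  have hgap : ∀ s ∈ T, s < tsSigma T a → s ≤ a := by
    intro s hs hlt
    by_contra! hcon
    exact absurd (tsSigma_le hs hcon) (not_le.mpr hlt)
  have ha' : 0 < tsSigma T a - a := sub_pos.mpr ha
  -- taking `s = a` in the definition, for every `ε`
  have hquot : q (tsSigma T a) - q a - (tsSigma T a - a) • q' = 0 := by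
    rw [← norm_le_zero_iff]
    refine le_of_forall_pos_le_add fun ε hε => ?_
    obtain ⟨U, hU, h⟩ := h (ε / (tsSigma T a - a)) (by positivity)
    have h1 := h a ⟨mem_of_mem_nhds hU, haT⟩
    rw [abs_of_pos ha', div_mul_cancel₀ _ ha'.ne'] at h1
    linarith
  intro ε hε
  have hδ : 0 < ε * (tsSigma T a - a) / (‖q'‖ + 1) := by positivity
  refine ⟨Ioo (a - ε * (tsSigma T a - a) / (‖q'‖ + 1)) (tsSigma T a),
    Ioo_mem_nhds (by linarith) ha, fun s hs => ?_⟩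
  have hsa : s ≤ a := hgap s hs.2 hs.1.2
  have hexp : g (tsSigma T a) - g s - (tsSigma T a - s) • q' = (s - a) • q' := by
    rw [hσ, heq s hs.2 hsa]
    have : (tsSigma T a - s) • q' = (tsSigma T a - a) • q' - (s - a) • q' := by
      rw [← sub_smul]; congr 1; ring
    rw [this, ← sub_add, hquot, zero_add]
  rw [hexp, norm_smul, Real.norm_eq_abs, abs_of_nonpos (by linarith), abs_of_pos (by linarith)]
  have h1 : a - s ≤ ε * (tsSigma T a - a) / (‖q'‖ + 1) := by linarith [hs.1.1]
  rw [le_div_iff₀ (by positivity)] at h1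
  have h2 : ε * (tsSigma T a - a) ≤ ε * (tsSigma T a - s) := by gcongr
  nlinarith [norm_nonneg q']

theorem DeltaAC.congr {n : ℕ} {T : Set ℝ} {a b : ℝ} {q g : ℝ → EuclideanSpace ℝ (Fin n)}
    (h : DeltaAC T a b q) (heq : ∀ t ∈ Icc a b ∩ T, g t = q t) : DeltaAC T a b g := by
  intro ε hε
  obtain ⟨δ, hδ, h⟩ := h ε hε
  refine ⟨δ, hδ, fun m u v hu hv huv hd hs => ?_⟩
  refine lt_of_eq_of_lt (Finset.sum_congr rfl fun k hk => ?_) (h m u v hu hv huv hd hs)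
  rw [heq _ (hu k (Finset.mem_range.mp hk)), heq _ (hv k (Finset.mem_range.mp hk))]

/-- Transfer of the solution property on `[a,b]_T` to a function `g` agreeing with `q` on
`[a,b]_T`. To the left of `a`, either `g` agrees with `q` near `a`, or `g` is constant. -/
theorem IsSolIcc.congr {n : ℕ} {T : Set ℝ} (hT : IsClosed T) {Ω : Set (EuclideanSpace ℝ (Fin n))}
    {f : EuclideanSpace ℝ (Fin n) → ℝ → EuclideanSpace ℝ (Fin n)}
    {t₀ : ℝ} {q₀ : EuclideanSpace ℝ (Fin n)} {q g : ℝ → EuclideanSpace ℝ (Fin n)} {a b : ℝ}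
    (h : IsSolIcc T Ω f t₀ q₀ q a b) (hb : b ∈ T) (ht₀ : t₀ ∈ Icc a b ∩ T)
    (heq : ∀ t ∈ Icc a b ∩ T, g t = q t)
    (hleft : (∃ a' < a, ∀ t ∈ Ico a' a ∩ T, g t = q t) ∨ ∀ t ∈ T, t < a → g t = g a) :
    IsSolIcc T Ω f t₀ q₀ g a b := by
  obtain ⟨hΩ, hAC, h0, hd⟩ := h
  refine ⟨fun t ht => heq t ht ▸ hΩ t ht, hAC.congr heq, (heq _ ht₀).trans h0, ?_⟩
  have hnull : ∀ᵐ t ∂((deltaMeasure T).restrict (Ico a b ∩ T)), t = a → RightScattered T a := by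
    by_cases ha : RightScattered T a
    · exact Eventually.of_forall fun _ _ => ha
    · refine ae_restrict_of_ae ?_
      filter_upwards [compl_mem_ae_iff.mpr (deltaMeasure_singleton ha)] with t ht hta
      exact absurd hta ht
  filter_upwards [hd, hnull, ae_restrict_mem (measurableSet_Ico.inter hT.measurableSet)]
    with t htd hta htm
  have htI : t ∈ Icc a b ∩ T := ⟨Ico_subset_Icc_self htm.1, htm.2⟩
  rw [heq t htI]
  have hσ : g (tsSigma T t) = q (tsSigma T t) :=
    heq _ ⟨⟨htm.1.1.trans (le_tsSigma hb htm.1.2), tsSigma_le hb htm.1.2⟩,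
      tsSigma_mem hT hb htm.1.2⟩
  rcases htm.1.1.eq_or_lt with rfl | hat
  · rcases hleft with ⟨a', ha', hl⟩ | hl
    · refine htd.congr (Ioo_mem_nhds ha' htm.1.2) hσ fun s hs => ?_
      rcases lt_or_ge s a with hsa | hsa
      · exact hl s ⟨⟨hs.1.1.le, hsa⟩, hs.2⟩
      · exact heq s ⟨⟨hsa, hs.1.2.le⟩, hs.2⟩
    · refine hasDeltaDerivAt_of_const_left htm.2 (hta rfl) htd hσ fun s hs hsa => ?_
      rw [← heq a htI]
      rcases hsa.eq_or_lt with rfl | hsa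
      · rfl
      · exact hl s hs hsa
  · exact htd.congr (Ioo_mem_nhds hat htm.1.2) hσ fun s hs =>
      heq s ⟨Ioo_subset_Icc_self hs.1, hs.2⟩

theorem Trile.mem_Icc {T : Set ℝ} {t₀ a b : ℝ} (h : Trile T t₀ a b) : t₀ ∈ Icc a b := by
  rcases h with ⟨_, h1, h2⟩ | ⟨_, h1, h2⟩ | ⟨_, _, h1, h2⟩
  · exact ⟨h1.le, h2.le⟩
  · exact ⟨h1.le, h2.le⟩
  · exact ⟨h1.le, h2.le⟩

theorem MemI.base_mem {T : Set ℝ} {t₀ : ℝ} {I : Set ℝ} (h : MemI T t₀ I) : t₀ ∈ I := by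
  obtain ⟨hI, a, ha, b, hb, hab⟩ := h
  exact hI.out ha.1 hb.1 hab.mem_Icc

theorem SolExtends.trans {n : ℕ} {T : Set ℝ} {q₁ q₂ q₃ : ℝ → EuclideanSpace ℝ (Fin n)}
    {I₁ I₂ I₃ : Set ℝ} (h : SolExtends T q₃ I₃ q₂ I₂) (h' : SolExtends T q₂ I₂ q₁ I₁) :
    SolExtends T q₃ I₃ q₁ I₁ :=
  ⟨h'.1.trans h.1, fun t ht => (h.2 (h'.1 ht)).trans (h'.2 ht)⟩

theorem SolExtends.rfl {n : ℕ} {T : Set ℝ} {q : ℝ → EuclideanSpace ℝ (Fin n)} {I : Set ℝ} :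
    SolExtends T q I q I :=
  ⟨Subset.rfl, fun _ _ => Eq.refl _⟩

/-- A nonempty directed family of solutions has a common extension. -/
theorem isSol_glue {n : ℕ} {T : Set ℝ} (hT : IsClosed T) {Ω : Set (EuclideanSpace ℝ (Fin n))}
    {f : EuclideanSpace ℝ (Fin n) → ℝ → EuclideanSpace ℝ (Fin n)}
    {t₀ : ℝ} (ht₀ : t₀ ∈ T) {q₀ : EuclideanSpace ℝ (Fin n)} {ι : Type*} [Nonempty ι]
    (Q : ι → ℝ → EuclideanSpace ℝ (Fin n)) (J : ι → Set ℝ)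
    (hsol : ∀ i, IsSol T Ω f t₀ q₀ (Q i) (J i))
    (hdir : ∀ i j, ∃ k, SolExtends T (Q k) (J k) (Q i) (J i) ∧
      SolExtends T (Q k) (J k) (Q j) (J j)) :
    ∃ g : ℝ → EuclideanSpace ℝ (Fin n), IsSol T Ω f t₀ q₀ g (⋃ i, J i) ∧
      ∀ i, SolExtends T g (⋃ i, J i) (Q i) (J i) := by
  obtain ⟨g₀, hg₀⟩ : ∃ g₀ : ℝ → EuclideanSpace ℝ (Fin n), ∀ i, ∀ t ∈ J i ∩ T, g₀ t = Q i t := by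
    refine ⟨fun t => if h : ∃ i, t ∈ J i then Q h.choose t else 0, fun i t ht => ?_⟩
    have h : ∃ i, t ∈ J i := ⟨i, ht.1⟩
    simp only [dif_pos h]
    obtain ⟨k, hk1, hk2⟩ := hdir i h.choose
    rw [← hk1.2 ht, ← hk2.2 ⟨h.choose_spec, ht.2⟩]
  -- extension by the value at the least point of the domain, if there is one
  obtain ⟨g, hg, hgmin⟩ : ∃ g : ℝ → EuclideanSpace ℝ (Fin n),
      (∀ i, ∀ t ∈ J i ∩ T, g t = Q i t) ∧
      ∀ a, IsLeast ((⋃ i, J i) ∩ T) a → ∀ t ∈ T, t < a → g t = g a := by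
    by_cases hm : ∃ m, IsLeast ((⋃ i, J i) ∩ T) m
    · obtain ⟨m, hm⟩ := hm
      refine ⟨fun t => if t < m then g₀ m else g₀ t, fun i t ht => ?_, fun a ha _ _ hta => ?_⟩
      · have hmt : ¬ t < m := not_lt.mpr (hm.2 ⟨mem_iUnion_of_mem i ht.1, ht.2⟩)
        simp only [if_neg hmt]
        exact hg₀ i t ht
      · obtain rfl := ha.unique hm
        simp [hta]
    · exact ⟨g₀, hg₀, fun a ha => absurd ⟨a, ha⟩ hm⟩
  -- two points of the union lie in the interval of a common member
  have hpair : ∀ s ∈ (⋃ i, J i) ∩ T, ∀ t ∈ (⋃ i, J i) ∩ T, ∃ k, s ∈ J k ∧ t ∈ J k := by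
    rintro s ⟨hs, hsT⟩ t ⟨ht, htT⟩
    obtain ⟨i, hi⟩ := mem_iUnion.mp hs
    obtain ⟨j, hj⟩ := mem_iUnion.mp ht
    obtain ⟨k, hk1, hk2⟩ := hdir i j
    exact ⟨k, (hk1.1 ⟨hi, hsT⟩).1, (hk2.1 ⟨hj, htT⟩).1⟩
  have hsub : ∀ i, J i ⊆ ⋃ i, J i := fun i => subset_iUnion J i
  refine ⟨g, ⟨⟨?_, ?_⟩, ?_, ?_⟩, fun i => ⟨inter_subset_inter_left _ (hsub i), hg i⟩⟩
  · have hmem : ∀ i, t₀ ∈ J i := fun i => (hsol i).1.base_mem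
    refine (isPreconnected_iUnion ⟨t₀, mem_iInter.mpr hmem⟩ fun i => ?_).ordConnected
    exact (hsol i).1.1.isPreconnected
  · obtain ⟨i⟩ := ‹Nonempty ι›
    obtain ⟨a, ha, b, hb, hab⟩ := (hsol i).1.2
    exact ⟨a, ⟨hsub i ha.1, ha.2⟩, b, ⟨hsub i hb.1, hb.2⟩, hab⟩
  · rintro t ⟨ht, htT⟩
    obtain ⟨i, hi⟩ := mem_iUnion.mp ht
    rw [hg i t ⟨hi, htT⟩]
    exact (hsol i).2.1 t ⟨hi, htT⟩
  · intro a ha b hb hab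
    by_cases hmin : IsLeast ((⋃ i, J i) ∩ T) a
    · obtain ⟨k, hka, hkb⟩ := hpair a ha b hb
      exact ((hsol k).2.2 a ⟨hka, ha.2⟩ b ⟨hkb, hb.2⟩ hab).congr hT hb.2 ⟨hab.mem_Icc, ht₀⟩
        (fun t ht => hg k t ⟨(hsol k).1.1.out hka hkb ht.1, ht.2⟩) (Or.inr (hgmin a hmin))
    · obtain ⟨a', ha', haa⟩ : ∃ a' ∈ (⋃ i, J i) ∩ T, a' < a := by
        by_contra! hcon
        exact hmin ⟨ha, hcon⟩
      obtain ⟨k, hka', hkb⟩ := hpair a' ha' b hb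
      have hab' : a ≤ b := hab.mem_Icc.1.trans hab.mem_Icc.2
      have hka : a ∈ J k := (hsol k).1.1.out hka' hkb ⟨haa.le, hab'⟩
      exact ((hsol k).2.2 a ⟨hka, ha.2⟩ b ⟨hkb, hb.2⟩ hab).congr hT hb.2 ⟨hab.mem_Icc, ht₀⟩
        (fun t ht => hg k t ⟨(hsol k).1.1.out hka hkb ht.1, ht.2⟩)
        (Or.inl ⟨a', haa, fun t ht =>
          hg k t ⟨(hsol k).1.1.out hka' hka (Ico_subset_Icc_self ht.1), ht.2⟩⟩)

theorem stmt9 {n : ℕ}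
    (T : Set ℝ) (hTclosed : IsClosed T) (hTnontriv : T.Nontrivial)
    (Ω : Set (EuclideanSpace ℝ (Fin n))) (hΩopen : IsOpen Ω) (hΩne : Ω.Nonempty)
    (f : EuclideanSpace ℝ (Fin n) → ℝ → EuclideanSpace ℝ (Fin n)) (hf : DeltaCaratheodory T Ω f)
    (t₀ : ℝ) (ht₀ : t₀ ∈ T) (q₀ : EuclideanSpace ℝ (Fin n)) (hq₀ : q₀ ∈ Ω)
    (hinf : HInfty T Ω f)
    (q : ℝ → EuclideanSpace ℝ (Fin n)) (I : Set ℝ) (hq : IsSol T Ω f t₀ q₀ q I) :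
    ∃ (qb : ℝ → EuclideanSpace ℝ (Fin n)) (Ib : Set ℝ),
      IsMaxSol T Ω f t₀ q₀ qb Ib ∧ SolExtends T qb Ib q I := by
  let P := {p : (ℝ → EuclideanSpace ℝ (Fin n)) × Set ℝ //
    IsSol T Ω f t₀ q₀ p.1 p.2 ∧ SolExtends T p.1 p.2 q I}
  let r : P → P → Prop := fun x y => SolExtends T y.1.1 y.1.2 x.1.1 x.1.2
  have hchain : ∀ c : Set P, IsChain r c → ∃ ub, ∀ x ∈ c, r x ub := by
    intro c hc
    rcases c.eq_empty_or_nonempty with rfl | ⟨x₀, hx₀⟩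
    · exact ⟨⟨(q, I), hq, SolExtends.rfl⟩, fun x hx => absurd hx (notMem_empty x)⟩
    have : Nonempty c := ⟨⟨x₀, hx₀⟩⟩
    obtain ⟨g, hg, hext⟩ := isSol_glue hTclosed ht₀ (fun x : c => x.1.1.1) (fun x : c => x.1.1.2)
      (fun x => x.1.2.1) (fun x y => by
        by_cases hxy : x.1 = y.1
        · exact ⟨x, SolExtends.rfl, by rw [hxy]; exact SolExtends.rfl⟩
        · rcases hc x.2 y.2 hxy with h | h
          · exact ⟨y, h, SolExtends.rfl⟩
          · exact ⟨x, SolExtends.rfl, h⟩)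
    exact ⟨⟨(g, _), hg, (hext ⟨x₀, hx₀⟩).trans x₀.2.2⟩, fun x hx => hext ⟨x, hx⟩⟩
  obtain ⟨m, hm⟩ := exists_maximal_of_chains_bounded hchain
    (fun {x y z} hxy hyz => SolExtends.trans hyz hxy)
  refine ⟨m.1.1, m.1.2, ⟨m.2.1, fun q₁ I₁ h₁ hext => ?_⟩, m.2.2⟩
  exact (hm ⟨(q₁, I₁), h₁, hext.trans m.2.2⟩ hext).1.antisymm hext.1

end
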